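/- Let n ∈ ℕ, A an n×n real matrix, v ∈ ℝⁿ, and d_k the determinants of the path-extended matrices M_k. Let D ≥ 3 be an integer and assume det A > 0 and d_{D−2} = 0. Then for every k with 0 ≤ k ≤ D−2 one has d_k = ((D−2−k)/(D−2))·det A; in particular d_k > 0 for all 0 ≤ k ≤ D−3. -/

import Mathlib

/-- The path-extended matrix `M_k`: the top-left `n × n` block is `A`; the first
appended index is coupled to the original indices by `v`; appended diagonal entries
are `2`; consecutive appended indices are coupled by `-1`; all other new entries
vanish.  For `k = 0` this is just `A` (reindexed along `Fin (n + 0)`). -/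
def pathExt (n : ℕ) (A : Matrix (Fin n) (Fin n) ℝ) (v : Fin n → ℝ) (k : ℕ) :
    Matrix (Fin (n + k)) (Fin (n + k)) ℝ :=
  Matrix.of fun i j =>
    if hi : (i : ℕ) < n then
      if hj : (j : ℕ) < n then A ⟨i, hi⟩ ⟨j, hj⟩
      else if (j : ℕ) = n then v ⟨i, hi⟩ else 0
    else
      if hj : (j : ℕ) < n then
        if (i : ℕ) = n then v ⟨j, hj⟩ else 0
      else
        if (i : ℕ) = (j : ℕ) then 2
        else if (i : ℕ) + 1 = (j : ℕ) ∨ (j : ℕ) + 1 = (i : ℕ) then -1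
        else 0

/-- The determinants `d_k = det M_k` of the path-extended matrices. -/
def pathDet (n : ℕ) (A : Matrix (Fin n) (Fin n) ℝ) (v : Fin n → ℝ) (k : ℕ) : ℝ :=
  (pathExt n A v k).det

theorem det_tail_rec (m : ℕ) (M : Matrix (Fin (m + 2)) (Fin (m + 2)) ℝ)
    (hr : ∀ j : Fin m, M (Fin.last (m + 1)) j.castSucc.castSucc = 0)
    (hc : ∀ j : Fin m, M j.castSucc.castSucc (Fin.last (m + 1)) = 0)
    (h2 : M (Fin.last (m + 1)) (Fin.last (m + 1)) = 2)
    (h1 : M (Fin.last (m + 1)) (Fin.last m).castSucc = -1)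
    (h1' : M (Fin.last m).castSucc (Fin.last (m + 1)) = -1) :
    M.det = 2 * (M.submatrix Fin.castSucc Fin.castSucc).det
      - (M.submatrix (fun i : Fin m => i.castSucc.castSucc)
          (fun i : Fin m => i.castSucc.castSucc)).det := by
  have key : (M.submatrix (Fin.last (m + 1)).succAbove
      (Fin.last m).castSucc.succAbove).det =
      - (M.submatrix (fun i : Fin m => i.castSucc.castSucc)
          (fun i : Fin m => i.castSucc.castSucc)).det := by
    have e : (Fin.last m).castSucc.succAbove (Fin.last m) = Fin.last (m + 1) := by
      ext; simp [Fin.succAbove]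
    have e2 : ∀ j : Fin m, (Fin.last m).castSucc.succAbove j.castSucc
        = j.castSucc.castSucc := by
      intro j; ext; simp [Fin.succAbove, Fin.lt_def]
    rw [Matrix.det_succ_column _ (Fin.last m), Fin.sum_univ_castSucc]
    simp only [Matrix.submatrix_apply, Matrix.submatrix_submatrix, e, Fin.succAbove_last, hc, h1']
    have p : (-1 : ℝ) ^ (m + m) = 1 := Even.neg_one_pow ⟨m, rfl⟩
    simp only [Fin.val_last, p]
    simp [Function.comp_def, e2]
  have p : (-1 : ℝ) ^ (m + 1 + (m + 1)) = 1 := Even.neg_one_pow ⟨m + 1, rfl⟩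
  have p' : (-1 : ℝ) ^ (m + 1 + m) = -1 := Odd.neg_one_pow ⟨m, by ring⟩
  rw [Matrix.det_succ_row _ (Fin.last (m + 1)), Fin.sum_univ_castSucc, Fin.sum_univ_castSucc]
  rw [Fin.succAbove_last] at key
  simp only [hr, h1, h2, Fin.val_last, Fin.val_castSucc, p, p', Fin.succAbove_last]
  rw [key]
  simp
  ring

theorem pathDet_rec (n : ℕ) (A : Matrix (Fin n) (Fin n) ℝ) (v : Fin n → ℝ) (k : ℕ) :
    pathDet n A v (k + 2) = 2 * pathDet n A v (k + 1) - pathDet n A v k := by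
  unfold pathDet
  refine det_tail_rec (n + k) (pathExt n A v (k + 2)) ?_ ?_ ?_ ?_ ?_
  · intro j
    have := j.2
    simp [pathExt]
    grind
  · intro j
    have := j.2
    simp [pathExt]
    grind
  · simp [pathExt]
    grind
  · simp [pathExt]
    grind
  · simp [pathExt]
    grind

theorem pathDet_zero (n : ℕ) (A : Matrix (Fin n) (Fin n) ℝ) (v : Fin n → ℝ) :
    pathDet n A v 0 = A.det := by
  unfold pathDet
  congr 1
  ext i j
  have := i.2
  have := j.2
  simp [pathExt]

theorem pathDet_lin (n : ℕ) (A : Matrix (Fin n) (Fin n) ℝ) (v : Fin n → ℝ) (k : ℕ) :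
    pathDet n A v k = A.det + k * (pathDet n A v 1 - A.det) ∧
    pathDet n A v (k + 1) = A.det + (k + 1) * (pathDet n A v 1 - A.det) := by
  induction k with
  | zero => simp [pathDet_zero]
  | succ k ih =>
    obtain ⟨a, b⟩ := ih
    refine ⟨by push_cast; exact b, ?_⟩
    rw [pathDet_rec, a, b]
    push_cast
    ring

/-- if `det A > 0` and `d_{D-2} = 0` for some integer `D ≥ 3`, then
`d_k = ((D-2-k)/(D-2)) · det A` for all `0 ≤ k ≤ D-2`; in particular `d_k > 0`
for all `0 ≤ k ≤ D-3`. -/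
theorem pathDet_pos_chain (n : ℕ) (A : Matrix (Fin n) (Fin n) ℝ) (v : Fin n → ℝ)
    (D : ℕ) (hD : 3 ≤ D) (hA : 0 < A.det) (h0 : pathDet n A v (D - 2) = 0) :
    (∀ k : ℕ, k ≤ D - 2 →
        pathDet n A v k = (((D : ℝ) - 2 - (k : ℝ)) / ((D : ℝ) - 2)) * A.det) ∧
      (∀ k : ℕ, k ≤ D - 3 → 0 < pathDet n A v k) := by
  obtain ⟨m, rfl⟩ : ∃ m, D = m + 3 := ⟨D - 3, by omega⟩
  have h0' := (pathDet_lin n A v (m + 1)).1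
  have e : m + 3 - 2 = m + 1 := by omega
  rw [e] at h0
  rw [h0] at h0'
  push_cast at h0'
  have hm : (0 : ℝ) < (m : ℝ) + 1 := by positivity
  have hx : (((m + 3 : ℕ) : ℝ) - 2) = m + 1 := by push_cast; ring
  have main : ∀ k : ℕ, pathDet n A v k
      = ((((m + 3 : ℕ) : ℝ) - 2 - (k : ℝ)) / (((m + 3 : ℕ) : ℝ) - 2)) * A.det := by
    intro k
    rw [(pathDet_lin n A v k).1, hx]
    field_simp
    linear_combination (-(k : ℝ)) * h0'
  refine ⟨fun k _ => main k, fun k hk => ?_⟩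
  rw [main k, hx]
  have hk' : (k : ℝ) ≤ m := by exact_mod_cast (by omega : k ≤ m)
  exact mul_pos (div_pos (by linarith) hm) hA
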